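/- arXiv:0810.1619 — 2 statements merged into one kernel-verified Lean document; each statement's English description precedes it below -/
import Mathlib

section
/- Let Λ be a symmetric numerical semigroup of genus g ≥ 1 (conductor c = 2g) that is not hyperelliptic, i.e., not of the form ⟨2, 2n+1⟩ for any n ≥ 1. Then Λ has no generator greater than or equal to its conductor; that is, Λ is a leaf. -/
/-!
Write `F = 2g - 1` for the largest gap and `m` for the least nonzero element of `S`.
Since exactly `g` of the `2g` integers in `[0, F]` lie in `S`, the injection `x ↦ F - x` from
`S ∩ [0, F]` to the gaps is onto (`sub_gap_mem`): `F - i ∈ S` for every gap `i`.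
If `2 ∈ S`, then `S` is determined by its largest gap and equals `⟨2, 2g + 1⟩`
(`eq_hyperelliptic`), so here `1` and `2` are gaps and `m ≥ 3`.

Let `x = F + k ≥ c`. To decompose `x` it suffices to find a gap `i ≠ F` with `k + i ∈ S`, because
then `x = (F - i) + (k + i)`. For `k < m`, take `i = m - k`. For `k = m`, take `i` to be the largest
gap in its class modulo `m`: the classes of `1` and `2` are different, so one of them does not
contain `F`. For `k > m`, simply `x = m + (x - m)` with `x - m > F`.
-/

/-- A numerical semigroup: a subset of ℕ containing 0, closed under addition,
with finite complement. -/
def IsNumericalSemigroup (S : Set ℕ) : Prop :=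
  0 ∈ S ∧ (∀ a ∈ S, ∀ b ∈ S, a + b ∈ S) ∧ Sᶜ.Finite

/-- The conductor: the smallest `c` such that every `n ≥ c` belongs to `S`. -/
noncomputable def nsConductor (S : Set ℕ) : ℕ :=
  sInf {c : ℕ | ∀ n : ℕ, c ≤ n → n ∈ S}

/-- The genus: the number of gaps. -/
noncomputable def nsGenus (S : Set ℕ) : ℕ := Sᶜ.ncard

/-- The enumeration of `S`: the unique increasing bijection `ℕ → S`,
`λ_0 = 0 < λ_1 < λ_2 < ⋯`. -/
noncomputable def nsEnum (S : Set ℕ) : ℕ → ℕ := Nat.nth (· ∈ S)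

/-- A generator: a nonzero element that is not a sum of two nonzero elements. -/
def IsGenerator (S : Set ℕ) (x : ℕ) : Prop :=
  x ∈ S ∧ x ≠ 0 ∧ ¬ ∃ a ∈ S, ∃ b ∈ S, a ≠ 0 ∧ b ≠ 0 ∧ a + b = x

/-- An ordinary numerical semigroup: `{0} ∪ [c, ∞)`. -/
def IsOrdinary (S : Set ℕ) : Prop := S = {0} ∪ Set.Ici (nsConductor S)

/-- An effective generator: a generator that is ≥ the conductor. -/
def IsEffectiveGenerator (S : Set ℕ) (x : ℕ) : Prop :=
  IsGenerator S x ∧ nsConductor S ≤ x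

/-- A strong generator: an effective generator `x` such that `x + λ₁` is a
generator of `S \ {x}`. -/
def IsStrongGenerator (S : Set ℕ) (x : ℕ) : Prop :=
  IsEffectiveGenerator S x ∧ IsGenerator (S \ {x}) (x + nsEnum S 1)

/-- The Frobenius number: the largest gap. -/
noncomputable def nsFrobenius (S : Set ℕ) : ℕ := sSup Sᶜ

/-- An infinite chain of numerical semigroups: `Λ_0 = ℕ` and each `Λ_i` is
obtained from `Λ_{i+1}` by adjoining its Frobenius number. -/
def IsInfiniteChain (L : ℕ → Set ℕ) : Prop :=
  (∀ i, IsNumericalSemigroup (L i)) ∧ L 0 = Set.univ ∧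
  ∀ i, L (i + 1) ≠ Set.univ ∧ L i = L (i + 1) ∪ {nsFrobenius (L (i + 1))}

/-- `T` is a descendant of `S`: `T ⊆ S` and they agree below the conductor of `S`. -/
def IsDescendant (S T : Set ℕ) : Prop :=
  IsNumericalSemigroup T ∧ T ⊆ S ∧
  T ∩ Set.Iio (nsConductor S) = S ∩ Set.Iio (nsConductor S)

/-- Every integer from the conductor on belongs to the semigroup, so the infimum defining the
conductor is attained. -/
lemma mem_of_conductor_le {S : Set ℕ} (hS : IsNumericalSemigroup S) {n : ℕ}
    (hn : nsConductor S ≤ n) : n ∈ S := by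
  have hne : {c : ℕ | ∀ n : ℕ, c ≤ n → n ∈ S}.Nonempty := by
    obtain ⟨B, hB⟩ := hS.2.2.bddAbove
    refine ⟨B + 1, fun n hn => ?_⟩
    by_contra h
    have := hB h
    omega
  exact Nat.sInf_mem hne n hn

lemma pred_conductor_notMem {S : Set ℕ} (hS : IsNumericalSemigroup S)
    (hc : 1 ≤ nsConductor S) : nsConductor S - 1 ∉ S := by
  intro h
  have : nsConductor S ≤ nsConductor S - 1 := by
    refine Nat.sInf_le fun n hn => ?_
    rcases Nat.lt_or_ge n (nsConductor S) with h1 | h1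
    · rwa [show n = nsConductor S - 1 by omega]
    · exact mem_of_conductor_le hS h1
  omega

/-- The reflection property of a symmetric semigroup: reflecting a gap in the largest gap `2g - 1`
gives an element. -/
lemma sub_gap_mem {S : Set ℕ} (hS : IsNumericalSemigroup S) (hg : 1 ≤ nsGenus S)
    (hsym : nsConductor S = 2 * nsGenus S) {i : ℕ} (hi : i ∉ S) :
    2 * nsGenus S - 1 - i ∈ S := by
  classical
  have hmem : ∀ n, 2 * nsGenus S ≤ n → n ∈ S := fun n hn =>
    mem_of_conductor_le hS (hsym ▸ hn)
  have hF : 2 * nsGenus S - 1 ∉ S := by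
    have := pred_conductor_notMem hS (by omega)
    rwa [hsym] at this
  set g := nsGenus S with hgdef
  set A := (Finset.range (2 * g)).filter (· ∈ S) with hA
  set G := (Finset.range (2 * g)).filter (· ∉ S) with hG
  have hGcard : G.card = g := by
    have : (G : Set ℕ) = Sᶜ := by
      ext n
      simp only [hG, Finset.coe_filter, Finset.mem_range, Set.mem_ofPred_eq, Set.mem_compl_iff,
        and_iff_right_iff_imp]
      intro hn
      by_contra h
      exact hn (hmem n (by omega))
    rw [hgdef, nsGenus, ← this, Set.ncard_coe_finset]
  have hAcard : A.card = g := by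
    have := Finset.card_filter_add_card_filter_not (s := Finset.range (2 * g)) (· ∈ S)
    rw [Finset.card_range] at this
    change A.card + G.card = _ at this
    omega
  have hsub : A.image (fun n => 2 * g - 1 - n) ⊆ G := by
    intro y hy
    obtain ⟨a, ha, rfl⟩ := Finset.mem_image.1 hy
    obtain ⟨ha1, ha2⟩ := Finset.mem_filter.1 ha
    rw [Finset.mem_range] at ha1
    refine Finset.mem_filter.2 ⟨Finset.mem_range.2 (by omega), fun h => hF ?_⟩
    have := hS.2.1 _ ha2 _ h
    rwa [show a + (2 * g - 1 - a) = 2 * g - 1 by omega] at this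
  have hinj : (A.image (fun n => 2 * g - 1 - n)).card = A.card := by
    refine Finset.card_image_of_injOn fun a ha b hb hab => ?_
    have ha1 := Finset.mem_range.1 (Finset.mem_filter.1 (Finset.mem_coe.1 ha)).1
    have hb1 := Finset.mem_range.1 (Finset.mem_filter.1 (Finset.mem_coe.1 hb)).1
    omega
  have heq := Finset.eq_of_subset_of_card_le hsub (by omega)
  have hi2 : i ∈ G := by
    refine Finset.mem_filter.2 ⟨Finset.mem_range.2 ?_, hi⟩
    by_contra h
    exact hi (hmem i (by omega))
  rw [← heq] at hi2
  obtain ⟨a, ha, rfl⟩ := Finset.mem_image.1 hi2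
  obtain ⟨ha1, ha2⟩ := Finset.mem_filter.1 ha
  rw [Finset.mem_range] at ha1
  rwa [show 2 * g - 1 - (2 * g - 1 - a) = a by omega]

lemma mul_mem {S : Set ℕ} (hS : IsNumericalSemigroup S) {a : ℕ} (ha : a ∈ S) (k : ℕ) :
    a * k ∈ S := by
  induction k with
  | zero => simpa using hS.1
  | succ k ih => exact hS.2.1 _ ih _ ha

/-- A semigroup containing `2` and having even conductor `2g` is `⟨2, 2g + 1⟩`: all odd numbers
below the odd largest gap `2g - 1` are gaps too. -/
lemma eq_hyperelliptic {S : Set ℕ} (hS : IsNumericalSemigroup S) {g : ℕ} (hg : 1 ≤ g)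
    (hc : nsConductor S = 2 * g) (h2 : 2 ∈ S) :
    S = {x : ℕ | ∃ a b : ℕ, x = 2 * a + (2 * g + 1) * b} := by
  have hF := pred_conductor_notMem hS (by omega)
  rw [hc] at hF
  ext x
  constructor
  · intro hx
    rcases Nat.even_or_odd' x with ⟨a, rfl | rfl⟩
    · exact ⟨a, 0, by omega⟩
    · rcases Nat.lt_or_ge a g with h | h
      · refine absurd (hS.2.1 _ hx _ (mul_mem hS h2 (g - 1 - a))) ?_
        rwa [show 2 * a + 1 + 2 * (g - 1 - a) = 2 * g - 1 by omega]
      · exact ⟨a - g, 1, by omega⟩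
  · rintro ⟨a, b, rfl⟩
    exact hS.2.1 _ (mul_mem hS h2 a) _
      (mul_mem hS (mem_of_conductor_le hS (by omega)) b)

/-- The progression `r, r + m, r + 2m, …` starts at a gap and eventually stays in `S`; `i` is the
term before its first element of `S`. -/
lemma exists_last_gap {S : Set ℕ} (hS : IsNumericalSemigroup S) {m r : ℕ} (hm : 0 < m)
    (hr : r ∉ S) : ∃ i, i ∉ S ∧ i + m ∈ S ∧ i % m = r % m := by
  classical
  have hex : ∃ k, r + m * k ∈ S := by
    refine ⟨nsConductor S, mem_of_conductor_le hS ?_⟩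
    have := Nat.le_mul_of_pos_left (nsConductor S) hm
    omega
  obtain ⟨k, hk⟩ : ∃ k, Nat.find hex = k + 1 :=
    Nat.exists_eq_succ_of_ne_zero fun h0 => hr (by simpa [h0] using Nat.find_spec hex)
  refine ⟨r + m * k, Nat.find_min hex (by omega), ?_, by simp⟩
  have := Nat.find_spec hex
  rw [hk, Nat.mul_succ] at this
  rwa [Nat.add_assoc]

/-- A non-hyperelliptic symmetric numerical semigroup of genus
`g ≥ 1` has no generator greater than or equal to its conductor, i.e. it is a
leaf. -/
theorem stmt_3 (S : Set ℕ) (hS : IsNumericalSemigroup S)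
    (hg : 1 ≤ nsGenus S) (hsym : nsConductor S = 2 * nsGenus S)
    (hhyp : ¬ ∃ n : ℕ, 1 ≤ n ∧
      S = {x : ℕ | ∃ a b : ℕ, x = 2 * a + (2 * n + 1) * b}) :
    ∀ x : ℕ, IsGenerator S x → x < nsConductor S := by
  classical
  intro x ⟨_, _, hx⟩
  by_contra! hcx
  have h2 : 2 ∉ S := fun h => hhyp ⟨_, hg, eq_hyperelliptic hS hg hsym h⟩
  have h1 : 1 ∉ S := fun h => h2 (hS.2.1 _ h _ h)
  have hmem : ∀ n, 2 * nsGenus S ≤ n → n ∈ S := fun n hn =>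
    mem_of_conductor_le hS (hsym ▸ hn)
  have hrefl : ∀ i, i ∉ S → 2 * nsGenus S - 1 - i ∈ S := fun i hi => sub_gap_mem hS hg hsym hi
  rw [hsym] at hcx
  obtain ⟨F, hF⟩ : ∃ F, 2 * nsGenus S = F + 1 := ⟨2 * nsGenus S - 1, by omega⟩
  simp only [hF, Nat.add_sub_cancel] at hmem hrefl hcx
  obtain ⟨k, rfl⟩ := Nat.exists_eq_add_of_le (show F ≤ x by omega)
  have hdec : ∀ i, i ∉ S → i ≠ F → k + i ∈ S → False := by
    intro i hi hiF hki
    have hlt : i < F + 1 := by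
      by_contra h
      exact hi (hmem i (by omega))
    exact hx ⟨F - i, hrefl i hi, k + i, hki, by omega, by omega, by omega⟩
  have hex : ∃ m, m ∈ S ∧ 0 < m := ⟨F + 1, hmem _ le_rfl, by omega⟩
  obtain ⟨hmS, hm0⟩ := Nat.find_spec hex
  have hmin : ∀ n, n ∈ S → 0 < n → Nat.find hex ≤ n := fun n h h' => Nat.find_min' hex ⟨h, h'⟩
  generalize Nat.find hex = m at hmS hm0 hmin
  have hm3 : 3 ≤ m := by
    have : m ≠ 1 := fun h => h1 (h ▸ hmS)
    have : m ≠ 2 := fun h => h2 (h ▸ hmS)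
    omega
  rcases lt_trichotomy k m with hk | hk | hk
  · refine hdec (m - k) (fun h => ?_) (fun h => ?_) (by rwa [Nat.add_sub_cancel' hk.le])
    · have := hmin _ h (by omega)
      omega
    -- If `m - k = F`, then `F < m`, but the reflection `F - 1` of the gap `1` is a nonzero element
    -- below `m`.
    · have hF2 : 2 ≤ F := by
        by_contra h'
        exact h2 (hmem 2 (by omega))
      have := hmin _ (hrefl 1 h1) (by omega)
      omega
  · subst hk
    obtain ⟨i, hi, hik, hir⟩ := exists_last_gap hS hm0 h1
    obtain ⟨j, hj, hjk, hjr⟩ := exists_last_gap hS hm0 h2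
    by_cases hiF : i = F
    · refine hdec j hj (fun hjF => ?_) (by rwa [Nat.add_comm])
      rw [hiF, Nat.mod_eq_of_lt (show 1 < k by omega)] at hir
      rw [hjF, Nat.mod_eq_of_lt (show 2 < k by omega)] at hjr
      omega
    · exact hdec i hi hiF (by rwa [Nat.add_comm])
  · exact hx ⟨m, hmS, F + k - m, hmem _ (by omega), by omega, by omega, by omega⟩
end

section
/- Let Λ be a non-ordinary numerical semigroup with enumeration λ and conductor c, and let ν_i = #{j ∈ ℕ : λ_i − λ_j ∈ Λ}. Let λ_k ∈ Λ with λ_k ≠ 2λ_1. Then λ_k is a strong generator of Λ if and only if λ_k ≥ c and ν_{k+λ_1} = 4. -/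
/-- The elements `a` of `S` with `y - a ∈ S`. -/
def nsDivisors (S : Set ℕ) (y : ℕ) : Set ℕ := {a | a ∈ S ∧ ∃ b ∈ S, a + b = y}

section
variable {S : Set ℕ}

lemma mem_of_nsConductor_le (hS : IsNumericalSemigroup S) {n : ℕ} (h : nsConductor S ≤ n) :
    n ∈ S := by
  have hne : {c : ℕ | ∀ n : ℕ, c ≤ n → n ∈ S}.Nonempty := by
    obtain ⟨b, hb⟩ := hS.2.2.bddAbove
    refine ⟨b + 1, fun n hn => ?_⟩
    by_contra hnS
    have := hb hnS
    omega
  exact Nat.sInf_mem hne n h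

lemma infinite_of_isNumericalSemigroup (hS : IsNumericalSemigroup S) :
    {a | a ∈ S}.Infinite :=
  fun hf => Set.infinite_univ ((Set.union_compl_self S) ▸ hf.union hS.2.2)

lemma nsEnum_strictMono (hS : IsNumericalSemigroup S) : StrictMono (nsEnum S) :=
  Nat.nth_strictMono (infinite_of_isNumericalSemigroup hS)

lemma nsEnum_mem (hS : IsNumericalSemigroup S) (k : ℕ) : nsEnum S k ∈ S :=
  Nat.nth_mem_of_infinite (infinite_of_isNumericalSemigroup hS) k

lemma exists_nsEnum_eq {a : ℕ} (ha : a ∈ S) : ∃ j, nsEnum S j = a := by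
  classical
  exact ⟨Nat.count (· ∈ S) a, Nat.nth_count (p := (· ∈ S)) ha⟩

lemma nsEnum_one_pos (hS : IsNumericalSemigroup S) : 0 < nsEnum S 1 :=
  (Nat.zero_le _).trans_lt (nsEnum_strictMono hS Nat.zero_lt_one)

lemma nsEnum_one_le (hS : IsNumericalSemigroup S) {a : ℕ} (ha : a ∈ S) (h0 : a ≠ 0) :
    nsEnum S 1 ≤ a := by
  obtain ⟨j, rfl⟩ := exists_nsEnum_eq ha
  refine (nsEnum_strictMono hS).monotone (Nat.one_le_iff_ne_zero.2 ?_)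
  rintro rfl
  exact h0 (Nat.nth_zero_of_zero hS.1)

lemma nsEnum_one_lt_nsConductor (hS : IsNumericalSemigroup S) (hord : ¬ IsOrdinary S) :
    nsEnum S 1 < nsConductor S := by
  by_contra! h
  refine hord (Set.ext fun a => ⟨fun ha => ?_, ?_⟩)
  · by_cases h0 : a = 0
    · exact Or.inl h0
    · exact Or.inr (h.trans (nsEnum_one_le hS ha h0))
  · rintro (rfl | ha)
    · exact hS.1
    · exact mem_of_nsConductor_le hS ha

lemma nsEnum_add (hS : IsNumericalSemigroup S) {k : ℕ} (h : nsConductor S ≤ nsEnum S k)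
    (i : ℕ) : nsEnum S (k + i) = nsEnum S k + i := by
  classical
  have hcount : Nat.count (· ∈ S) (nsEnum S k + i) = k + i := by
    induction i with
    | zero => exact Nat.count_nth_of_infinite (infinite_of_isNumericalSemigroup hS) k
    | succ i ih =>
      rw [← add_assoc, Nat.count_succ, ih,
        if_pos (mem_of_nsConductor_le hS (h.trans (Nat.le_add_right _ i))), add_assoc]
  rw [← hcount]
  exact Nat.nth_count (p := (· ∈ S)) (mem_of_nsConductor_le hS (h.trans (Nat.le_add_right _ i)))

/-- Counting indices `j` in the definition of `ν` is counting the elements `λ_j`. -/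
lemma ncard_index_eq (hS : IsNumericalSemigroup S) (y : ℕ) :
    {j : ℕ | ∃ m ∈ S, nsEnum S j + m = y}.ncard = (nsDivisors S y).ncard := by
  rw [← Set.ncard_image_of_injective _ (nsEnum_strictMono hS).injective]
  congr 1
  ext a
  constructor
  · rintro ⟨j, hj, rfl⟩
    exact ⟨nsEnum_mem hS j, hj⟩
  · rintro ⟨ha, hb⟩
    obtain ⟨j, rfl⟩ := exists_nsEnum_eq ha
    exact ⟨j, hb, rfl⟩

lemma ncard_eq_four_iff (hS : IsNumericalSemigroup S) {m x : ℕ} (hm : m ∈ S) (hx : x ∈ S)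
    (hm0 : 0 < m) (hmx : m < x) :
    (nsDivisors S (x + m)).ncard = 4 ↔
      ∀ a ∈ S, ∀ b ∈ S, a + b = x + m → a = 0 ∨ a = m ∨ a = x ∨ a = x + m := by
  have hcard : ({0, m, x, x + m} : Set ℕ).ncard = 4 := by
    have : ({0, m, x, x + m} : Set ℕ) = (({0, m, x, x + m} : Finset ℕ) : Set ℕ) := by simp
    rw [this, Set.ncard_coe_finset]
    repeat rw [Finset.card_insert_of_notMem (by simp; omega)]
    simp
  have hsub : ({0, m, x, x + m} : Set ℕ) ⊆ nsDivisors S (x + m) := by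
    rintro a (rfl | rfl | rfl | rfl)
    · exact ⟨hS.1, x + m, hS.2.1 _ hx _ hm, Nat.zero_add _⟩
    · exact ⟨hm, x, hx, by omega⟩
    · exact ⟨hx, m, hm, rfl⟩
    · exact ⟨hS.2.1 _ hx _ hm, 0, hS.1, rfl⟩
  have hfin : (nsDivisors S (x + m)).Finite :=
    (Set.finite_Iic (x + m)).subset fun a ⟨_, b, _, hab⟩ => by
      simp only [Set.mem_Iic]
      omega
  constructor
  · intro h a ha b hb hab
    have heq := Set.eq_of_subset_of_ncard_le hsub (by omega) hfin
    have hmem : a ∈ nsDivisors S (x + m) := ⟨ha, b, hb, hab⟩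
    rw [← heq] at hmem
    simpa using hmem
  · intro h
    rw [← hcard]
    congr 1
    refine Set.Subset.antisymm (fun a ⟨ha, b, hb, hab⟩ => ?_) hsub
    simpa using h a ha b hb hab

end

/-- For a non-ordinary numerical semigroup `Λ` with conductor `c`
and `ν_i = #{j : λ_i - λ_j ∈ Λ}`, an element `λ_k ≠ 2λ_1` is a strong generator
iff `λ_k ≥ c` and `ν_{k+λ_1} = 4`. -/
theorem stmt_4 (S : Set ℕ) (hS : IsNumericalSemigroup S) (hord : ¬ IsOrdinary S)
    (k : ℕ) (hk : nsEnum S k ≠ 2 * nsEnum S 1) :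
    IsStrongGenerator S (nsEnum S k) ↔
      nsConductor S ≤ nsEnum S k ∧
      {j : ℕ | ∃ m ∈ S, nsEnum S j + m = nsEnum S (k + nsEnum S 1)}.ncard = 4 := by
  have hm := nsEnum_mem hS 1
  have hm0 := nsEnum_one_pos hS
  have hmc := nsEnum_one_lt_nsConductor hS hord
  have hx := nsEnum_mem hS k
  rw [IsStrongGenerator, IsEffectiveGenerator, and_right_comm, and_comm]
  refine and_congr_right fun hc => ?_
  rw [nsEnum_add hS hc, ncard_index_eq hS, ncard_eq_four_iff hS hm hx hm0 (by omega)]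
  generalize nsEnum S 1 = m at *
  generalize nsEnum S k = x at *
  constructor
  · rintro ⟨-, -, -, hgen⟩ a ha b hb hab
    by_contra! hne
    exact hgen ⟨a, ⟨ha, hne.2.2.1⟩, b, ⟨hb, fun h : b = x => by omega⟩, by omega, by omega, hab⟩
  · intro h
    refine ⟨⟨hx, by omega, ?_⟩, ⟨hS.2.1 _ hx _ hm, fun h : x + m = x => by omega⟩, by omega, ?_⟩
    · rintro ⟨a, ha, b, hb, ha0, hb0, hab⟩
      have h1 := h a ha (b + m) (hS.2.1 _ hb _ hm) (by omega)
      have h2 := h b hb (a + m) (hS.2.1 _ ha _ hm) (by omega)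
      omega
    · rintro ⟨a, ⟨ha, hax : a ≠ x⟩, b, ⟨hb, hbx : b ≠ x⟩, ha0, hb0, hab⟩
      have := h a ha b hb hab
      omega
end
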